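/- arXiv:1909.07948 — 4 statements merged into one kernel-verified Lean document; each statement's English description precedes it below -/
import Mathlib

section
/- Let N ≥ 2 be an integer, let p, q be real numbers with 0 < q < 1 < p and pq > 1, let A, B > 0, and let (α_k)_{k≥1}, (β_k)_{k≥1} be sequences of positive reals satisfying β_k ≤ (α_k + 2)p, α_{k+1} ≤ (β_k + 2)q, and A·(pq)^k ≤ α_k ≤ B·(pq)^k, A·(pq)^k ≤ β_k ≤ B·(pq)^k for all k ≥ 1. Let C₀ ≥ 1 and C̃ > 0 be constants. Then there exist K₀ ≥ 1, K ≥ 2 and σ > 0 such that, defining D_k = σ·Σ_{i=1}^{k} i·(pq)^{−i}, C_{α_k} = C₀·K₀·K^{(pq)^k · D_k} and C_{β_k} = C₀·(C̃·C_{α_k}·α_k^{N−2})^p, the following hold for every k ≥ 1: (a) C_{α_k} ≥ 2^{α_k}; (b) C_{β_k} ≥ 2^{β_k}; (c) K₀·K^{(pq)^{k+1}·D_{k+1}} ≥ (C̃·C_{β_k}·β_k^{N−2})^q. -/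
/-!
Everything is compared on the logarithmic scale, and the choice `K₀ = 1`, `K = e` already works
with `σ` large. Write `r = pq > 1`, `m = N - 2` and `E k = r ^ k * D k`, so that
`log Cα k = log C₀ + E k`.

* Only the first term of the sum is needed for `r * E k ≥ σ * r ^ k` (`le_mul_weightedSum`).
  Since `α k, β k ≤ B * r ^ k` and `α k ≥ A`, this gives (a) and (b) once
  `σ ≥ r * (B * log 2 + |log Ct + m * log A|)`.
* Splitting off the last term gives `E (k + 1) = r * E k + σ * (k + 1)` (`weightedSum_succ`).
  In (c) the contributions `r * E k` cancel, and the remaining terms grow at most linearly in `k`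
  because `log (α k), log (β k) ≤ log B + k * log r`; they are absorbed by `σ * (k + 1)` once
  `σ ≥ 2 * r * (|log Ct| + log C₀ + m * |log B| + m * log r)`.
-/

open MeasureTheory Asymptotics Filter Metric Set

noncomputable def laplacian {N : ℕ} (u : EuclideanSpace ℝ (Fin N) → ℝ)
    (x : EuclideanSpace ℝ (Fin N)) : ℝ :=
  ∑ i : Fin N, iteratedFDeriv ℝ 2 u x ![EuclideanSpace.single i 1, EuclideanSpace.single i 1]

noncomputable def laplacianWithin {N : ℕ} (u : EuclideanSpace ℝ (Fin N) → ℝ)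
    (s : Set (EuclideanSpace ℝ (Fin N))) (x : EuclideanSpace ℝ (Fin N)) : ℝ :=
  ∑ i : Fin N, iteratedFDerivWithin ℝ 2 u s x ![EuclideanSpace.single i 1, EuclideanSpace.single i 1]

def VanishesInfOrder {N : ℕ} (w : EuclideanSpace ℝ (Fin N) → ℝ)
    (x₀ : EuclideanSpace ℝ (Fin N)) : Prop :=
  ∃ ε > (0:ℝ), ∀ m > (0:ℝ),
    (fun r : ℝ => ∫ x in ball x₀ r, |w x| ^ ε) =o[nhdsWithin 0 (Ioi 0)] fun r : ℝ => r ^ m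

noncomputable def spow (t s : ℝ) : ℝ := Real.sign t * |t| ^ s

noncomputable def distToInt (x : ℝ) : ℝ := min (Int.fract x) (1 - Int.fract x)

def IsRadial {N : ℕ} (u : EuclideanSpace ℝ (Fin N) → ℝ) : Prop :=
  ∃ U : ℝ → ℝ, ∀ x, u x = U ‖x‖

/-- The exponent `E (k + 1)` in terms of `E k`. -/
lemma weightedSum_succ {r : ℝ} (hr : 0 < r) (σ : ℝ) (k : ℕ) :
    r ^ (k + 1) * (σ * ∑ i ∈ Finset.Icc 1 (k + 1), (i : ℝ) / r ^ i) =
      r * (r ^ k * (σ * ∑ i ∈ Finset.Icc 1 k, (i : ℝ) / r ^ i)) + σ * (k + 1) := by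
  rw [Finset.sum_Icc_succ_top (by omega)]
  push_cast
  field_simp
  ring

/-- Lower bound on the exponent `E k` from the term `i = 1` of the sum. -/
lemma le_mul_weightedSum {r σ : ℝ} (hr : 0 < r) (hσ : 0 ≤ σ) {k : ℕ} (hk : 1 ≤ k) :
    σ * r ^ k ≤ r * (r ^ k * (σ * ∑ i ∈ Finset.Icc 1 k, (i : ℝ) / r ^ i)) := by
  have h : ((1 : ℕ) : ℝ) / r ^ 1 ≤ ∑ i ∈ Finset.Icc 1 k, (i : ℝ) / r ^ i :=
    Finset.single_le_sum (f := fun i : ℕ => (i : ℝ) / r ^ i) (fun i _ => by positivity)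
      (Finset.mem_Icc.2 ⟨le_rfl, hk⟩)
  calc σ * r ^ k = r * (r ^ k * (σ * (((1 : ℕ) : ℝ) / r ^ 1))) := by
        push_cast
        field_simp
    _ ≤ _ := by gcongr

theorem iteration_constants {N : ℕ} (hN : 2 ≤ N) {p q : ℝ} (hq0 : 0 < q) (hq1 : q < 1)
    (hp : 1 < p) (hpq : 1 < p * q) {A B : ℝ} (hA : 0 < A) (hB : 0 < B)
    {α β : ℕ → ℝ} (hαpos : ∀ k ≥ 1, 0 < α k) (hβpos : ∀ k ≥ 1, 0 < β k)
    (hβle : ∀ k ≥ 1, β k ≤ (α k + 2) * p)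
    (hαle : ∀ k ≥ 1, α (k + 1) ≤ (β k + 2) * q)
    (hαbd : ∀ k ≥ 1, A * (p * q) ^ k ≤ α k ∧ α k ≤ B * (p * q) ^ k)
    (hβbd : ∀ k ≥ 1, A * (p * q) ^ k ≤ β k ∧ β k ≤ B * (p * q) ^ k)
    {C₀ Ct : ℝ} (hC₀ : 1 ≤ C₀) (hCt : 0 < Ct) :
    ∃ K₀ K σ : ℝ, 1 ≤ K₀ ∧ 2 ≤ K ∧ 0 < σ ∧
      ∀ k ≥ 1,
        let D : ℕ → ℝ := fun j => σ * ∑ i ∈ Finset.Icc 1 j, (i : ℝ) / (p * q) ^ i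
        let Cα : ℕ → ℝ := fun j => C₀ * K₀ * K ^ ((p * q) ^ j * D j)
        let Cβ : ℕ → ℝ := fun j => C₀ * (Ct * Cα j * α j ^ (N - 2)) ^ p
        (2:ℝ) ^ α k ≤ Cα k ∧
        (2:ℝ) ^ β k ≤ Cβ k ∧
        (Ct * Cβ k * β k ^ (N - 2)) ^ q ≤ K₀ * K ^ ((p * q) ^ (k + 1) * D (k + 1)) := by
  set r : ℝ := p * q with hr
  have hr0 : 0 < r := by linarith
  obtain ⟨c, rfl⟩ : ∃ c, Real.exp c = C₀ := ⟨_, Real.exp_log (by linarith)⟩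
  obtain ⟨t, rfl⟩ : ∃ t, Real.exp t = Ct := ⟨_, Real.exp_log hCt⟩
  have hc : 0 ≤ c := Real.one_le_exp_iff.1 hC₀
  set m : ℝ := ((N - 2 : ℕ) : ℝ) with hm
  have hm0 : 0 ≤ m := Nat.cast_nonneg _
  have hl2 : 0 < Real.log 2 := Real.log_pos one_lt_two
  have hlr : 0 < Real.log r := Real.log_pos hpq
  obtain ⟨S, hS⟩ : ∃ S, S = B * Real.log 2 + |t + m * Real.log A| := ⟨_, rfl⟩
  obtain ⟨T, hT⟩ : ∃ T, T = |t| + c + m * |Real.log B| + m * Real.log r := ⟨_, rfl⟩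
  have hS0 : 0 < S := by rw [hS]; positivity
  have hT0 : 0 ≤ T := by rw [hT]; positivity
  have hσ : 0 < r * S + 2 * r * T := by positivity
  refine ⟨1, Real.exp 1, r * S + 2 * r * T, le_rfl, ?_, hσ, ?_⟩
  · linarith [Real.add_one_le_exp (1 : ℝ)]
  intro k hk
  have hsucc := weightedSum_succ hr0 (r * S + 2 * r * T) k
  have hlow := le_mul_weightedSum hr0 hσ.le hk
  dsimp only
  rw [hsucc]
  generalize r ^ k * ((r * S + 2 * r * T) * ∑ i ∈ Finset.Icc 1 k, (i : ℝ) / r ^ i) = E at hlow ⊢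
  have hrk : 1 ≤ r ^ k := one_le_pow₀ hpq.le
  -- the logarithms of `α k` and `β k` grow at most linearly in `k`
  have hlogle : ∀ x, 0 < x → x ≤ B * r ^ k → Real.log x ≤ |Real.log B| + k * Real.log r := by
    intro x hx hxB
    have h := Real.log_le_log hx hxB
    rw [Real.log_mul hB.ne' (by positivity), Real.log_pow] at h
    linarith [le_abs_self (Real.log B)]
  have ha := hlogle _ (hαpos k hk) (hαbd k hk).2
  have hb := hlogle _ (hβpos k hk) (hβbd k hk).2
  have haA : Real.log A ≤ Real.log (α k) :=
    Real.log_le_log hA ((le_mul_of_one_le_right hA.le hrk).trans (hαbd k hk).1)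
  have hαpow : α k ^ (N - 2) = Real.exp (m * Real.log (α k)) := by
    rw [hm, Real.exp_nat_mul, Real.exp_log (hαpos k hk)]
  have hβpow : β k ^ (N - 2) = Real.exp (m * Real.log (β k)) := by
    rw [hm, Real.exp_nat_mul, Real.exp_log (hβpos k hk)]
  have hαB : Real.log 2 * α k ≤ Real.log 2 * (B * r ^ k) := by
    gcongr
    exact (hαbd k hk).2
  have hβB : Real.log 2 * β k ≤ Real.log 2 * (B * r ^ k) := by
    gcongr
    exact (hβbd k hk).2
  have hE : S * r ^ k ≤ E := by
    refine le_of_mul_le_mul_left ?_ hr0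
    have : 0 ≤ 2 * r * T * r ^ k := by positivity
    linarith
  -- the constant part of `S` absorbs the possibly negative `log Ct + m * log A`
  have hE' : Real.log 2 * (B * r ^ k) + |t + m * Real.log A| ≤ E := by
    have h : |t + m * Real.log A| ≤ |t + m * Real.log A| * r ^ k :=
      le_mul_of_one_le_right (abs_nonneg _) hrk
    rw [hS] at hE
    linarith
  have habs := abs_nonneg (t + m * Real.log A)
  have hneg := neg_abs_le (t + m * Real.log A)
  have hmA := mul_le_mul_of_nonneg_left haA hm0
  rw [hαpow, hβpow, Real.rpow_def_of_pos two_pos, Real.rpow_def_of_pos two_pos]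
  simp only [mul_one, one_mul, ← Real.exp_add, ← Real.exp_mul, Real.exp_le_exp]
  refine ⟨by linarith, ?_, ?_⟩
  · have hB0 : 0 ≤ Real.log 2 * (B * r ^ k) := by positivity
    have hge : Real.log 2 * (B * r ^ k) ≤ t + (c + E) + m * Real.log (α k) := by linarith
    linarith [le_mul_of_one_le_right (hB0.trans hge) hp.le]
  · have hk0 : (0 : ℝ) ≤ k := Nat.cast_nonneg k
    -- each of the two error terms is at most `T * (k + 1)`
    have herr : ∀ x, x ≤ |Real.log B| + k * Real.log r → t + c + m * x ≤ T * (k + 1) := by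
      intro x hx
      have h1 := mul_le_mul_of_nonneg_left hx hm0
      have h2 : 0 ≤ (|t| + c + m * |Real.log B|) * k := by positivity
      have h3 : 0 ≤ m * Real.log r := by positivity
      rw [hT]
      linarith [le_abs_self t]
    have h1 := mul_le_mul_of_nonneg_left (herr _ ha) hr0.le
    have h2 := mul_le_mul_of_nonneg_left (herr _ hb) hq0.le
    have hTk : 0 ≤ T * (k + 1) := by positivity
    have h3 : q * (T * (k + 1)) ≤ r * (T * (k + 1)) :=
      mul_le_mul_of_nonneg_right (by linarith) hTk
    have h4 : 0 ≤ r * S * (k + 1) := by positivity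
    calc (t + (c + (t + (c + E) + m * Real.log (α k)) * p) + m * Real.log (β k)) * q
        = r * E + r * (t + c + m * Real.log (α k)) + q * (t + c + m * Real.log (β k)) := by
          rw [hr]; ring
      _ ≤ r * E + (r * S + 2 * r * T) * (k + 1) := by linarith
end

section
/- Let N ≥ 2, let Ω ⊆ ℝ^N be a nonempty bounded open set, let k > 0, and let f, g : Ω × ℝ × ℝ → ℝ satisfy (u − k·v)·(f(x,u,v) − k·g(x,u,v)) ≤ 0 for all x ∈ Ω and all u, v ∈ ℝ. Let u, v : ℝ^N → ℝ be continuous on cl(Ω), twice continuously differentiable on Ω, and satisfy Δu(x) + f(x, u(x), v(x)) = 0 and Δv(x) + g(x, u(x), v(x)) = 0 for all x ∈ Ω. If u(x) = k·v(x) for every x ∈ ∂Ω, then u(x) = k·v(x) for every x ∈ Ω. -/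
/-!
The difference `w = u - k v` satisfies `w Δw = -w (f - k g) ≥ 0` in `Ω`, so `Δw ≥ 0` wherever
`w > 0`, and `w = 0` on `∂Ω`. A weak maximum principle (`nonpos_of_laplacian_nonneg`) then gives
`w ≤ 0`; applied to `-w` it gives `w ≥ 0`.

For the maximum principle, suppose `w x₀ > 0` and maximise `w + ε ‖·‖²` over the compact set
`closure Ω`. If `ε` is small, the maximum exceeds every value of `ε ‖·‖²`, so it is attained
where `w > 0`, that is, at an interior point with `Δw ≥ 0`. There the Laplacian of `w + ε ‖·‖²` is at
least `2 N ε > 0`, while all pure second derivatives at a local maximum are nonpositive.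
-/

open MeasureTheory Asymptotics Filter Metric Set

/-- If the second derivative were positive, the point would also be a local minimum, so the function
would be locally constant. -/
lemma deriv_deriv_nonpos_of_isLocalMax {φ : ℝ → ℝ} {a : ℝ} (h : IsLocalMax φ a)
    (hc : ContinuousAt φ a) : deriv (deriv φ) a ≤ 0 := by
  by_contra! hpos
  have hmin := isLocalMin_of_deriv_deriv_pos hpos h.deriv_eq_zero hc
  have hconst : φ =ᶠ[nhds a] fun _ => φ a := by
    filter_upwards [h, hmin] with y h1 h2
    exact le_antisymm h1 h2
  have h2 : deriv (deriv φ) a = 0 := by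
    rw [hconst.deriv.deriv_eq]
    simp
  linarith

lemma deriv_deriv_line {E : Type*} [NormedAddCommGroup E] [NormedSpace ℝ E] {w : E → ℝ} {x : E}
    (hw : ContDiffAt ℝ 2 w x) (e : E) :
    deriv (deriv fun t : ℝ => w (x + t • e)) 0 = iteratedFDeriv ℝ 2 w x ![e, e] := by
  have hline : ∀ t : ℝ, HasDerivAt (fun t : ℝ => x + t • e) e t := fun t => by
    simpa using ((hasDerivAt_id t).smul_const e).const_add x
  have hx : x + (0 : ℝ) • e = x := by simp
  have hev : ∀ᶠ y in nhds x, DifferentiableAt ℝ w y := by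
    filter_upwards [hw.eventually (by simp)] with y hy
    exact hy.differentiableAt (by simp)
  have hcont : Tendsto (fun t : ℝ => x + t • e) (nhds 0) (nhds x) := by
    simpa using (hline 0).continuousAt.tendsto
  have h1 : deriv (fun t : ℝ => w (x + t • e)) =ᶠ[nhds 0] fun t => fderiv ℝ w (x + t • e) e := by
    filter_upwards [hcont.eventually hev] with t ht
    exact (ht.hasFDerivAt.comp_hasDerivAt t (hline t)).deriv
  have h2 : DifferentiableAt ℝ (fderiv ℝ w) (x + (0 : ℝ) • e) := by
    rw [hx]
    exact (hw.fderiv_right (m := 1) (by norm_num)).differentiableAt (by simp)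
  have h3 : HasDerivAt (fun t : ℝ => fderiv ℝ w (x + t • e))
      (fderiv ℝ (fderiv ℝ w) (x + (0 : ℝ) • e) e) 0 :=
    h2.hasFDerivAt.comp_hasDerivAt (0 : ℝ) (hline 0)
  have h4 : HasDerivAt (fun t : ℝ => fderiv ℝ w (x + t • e) e)
      (fderiv ℝ (fderiv ℝ w) (x + (0 : ℝ) • e) e e) 0 :=
    (ContinuousLinearMap.apply ℝ ℝ e).hasFDerivAt.comp_hasDerivAt (0 : ℝ) h3
  rw [h1.deriv_eq, iteratedFDeriv_two_apply, h4.deriv, hx]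
  rfl

lemma laplacian_nonpos_of_isLocalMax {N : ℕ} {w : EuclideanSpace ℝ (Fin N) → ℝ}
    {x : EuclideanSpace ℝ (Fin N)} (hw : ContDiffAt ℝ 2 w x) (h : IsLocalMax w x) :
    laplacian w x ≤ 0 := by
  refine Finset.sum_nonpos fun i _ => ?_
  rw [← deriv_deriv_line hw]
  have hcont : ContinuousAt (fun t : ℝ => x + t • (EuclideanSpace.single i 1 :
      EuclideanSpace ℝ (Fin N))) 0 := by fun_prop
  refine deriv_deriv_nonpos_of_isLocalMax ?_ ?_
  · have ht := hcont.tendsto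
    simp only [zero_smul, add_zero] at ht
    filter_upwards [ht.eventually h] with t ht'
    simpa using ht'
  · exact ContinuousAt.comp (g := w) (by simpa using hw.continuousAt) hcont

lemma laplacian_add_const_mul {N : ℕ} {u v : EuclideanSpace ℝ (Fin N) → ℝ}
    {x : EuclideanSpace ℝ (Fin N)} (c : ℝ) (hu : ContDiffAt ℝ 2 u x) (hv : ContDiffAt ℝ 2 v x) :
    laplacian (fun y => u y + c * v y) x = laplacian u x + c * laplacian v x := by
  have h : iteratedFDeriv ℝ 2 (fun y => u y + c * v y) x
      = iteratedFDeriv ℝ 2 u x + c • iteratedFDeriv ℝ 2 v x := by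
    have h1 := iteratedFDeriv_add_apply (i := 2) hu (hv.const_smul c)
    change _ = _ + iteratedFDeriv ℝ 2 (c • v) x at h1
    rw [iteratedFDeriv_const_smul_apply hv] at h1
    exact h1
  simp only [laplacian, h, Finset.mul_sum, ← Finset.sum_add_distrib]
  simp

lemma laplacian_norm_sq {N : ℕ} (x : EuclideanSpace ℝ (Fin N)) :
    laplacian (fun y => ‖y‖ ^ 2) x = 2 * N := by
  have h : ∀ i : Fin N, iteratedFDeriv ℝ 2 (fun y : EuclideanSpace ℝ (Fin N) => ‖y‖ ^ 2) x
      ![EuclideanSpace.single i 1, EuclideanSpace.single i 1] = 2 := by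
    intro i
    rw [← deriv_deriv_line (contDiff_norm_sq ℝ).contDiffAt]
    set e : EuclideanSpace ℝ (Fin N) := EuclideanSpace.single i 1 with he
    have hnorm : ‖e‖ = 1 := by simp [he]
    have h0 : (fun t : ℝ => ‖x + t • e‖ ^ 2)
        = fun t => ‖x‖ ^ 2 + 2 * inner ℝ x e * t + t ^ 2 := by
      funext t
      rw [norm_add_sq_real, inner_smul_right, norm_smul, hnorm, mul_one, Real.norm_eq_abs, sq_abs]
      ring
    have h1 : (deriv fun t : ℝ => ‖x‖ ^ 2 + 2 * inner ℝ x e * t + t ^ 2)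
        = fun t => 2 * inner ℝ x e + 2 * t := by
      funext t
      have := (((hasDerivAt_id t).const_mul (2 * inner ℝ x e)).const_add (‖x‖ ^ 2)).add
        ((hasDerivAt_id t).pow 2)
      refine HasDerivAt.deriv (this.congr_deriv ?_)
      simp
    rw [h0, h1]
    simp
  simp only [laplacian, h]
  simp [mul_comm]

/-- Weak maximum principle for a function that is only required to be subharmonic where it is
positive. -/
lemma nonpos_of_laplacian_nonneg {N : ℕ} (hN : 0 < N) {Ω : Set (EuclideanSpace ℝ (Fin N))}
    (hΩopen : IsOpen Ω) (hΩbdd : Bornology.IsBounded Ω) {w : EuclideanSpace ℝ (Fin N) → ℝ}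
    (hcont : ContinuousOn w (closure Ω)) (hw : ContDiffOn ℝ 2 w Ω)
    (hsub : ∀ x ∈ Ω, 0 < w x → 0 ≤ laplacian w x)
    (hbd : ∀ x ∈ frontier Ω, w x ≤ 0) : ∀ x ∈ Ω, w x ≤ 0 := by
  intro x₀ hx₀
  by_contra! hpos
  obtain ⟨R, hRpos, hR⟩ := hΩbdd.closure.exists_pos_norm_le
  -- `ε` is small enough that `ε ‖x‖² < w x₀` on `closure Ω`.
  obtain ⟨ε, hε, hεR⟩ : ∃ ε > 0, ε * R ^ 2 < w x₀ :=
    ⟨w x₀ / (2 * R ^ 2), by positivity, by field_simp; linarith⟩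
  have hcomp : IsCompact (closure Ω) := hΩbdd.isCompact_closure
  obtain ⟨x, hx, hmax⟩ := hcomp.exists_isMaxOn ⟨x₀, subset_closure hx₀⟩
    (f := fun y => w y + ε * ‖y‖ ^ 2) (by fun_prop)
  have hwx : 0 < w x := by
    have h1 : w x₀ + ε * ‖x₀‖ ^ 2 ≤ w x + ε * ‖x‖ ^ 2 := hmax (subset_closure hx₀)
    have h2 : ε * ‖x‖ ^ 2 ≤ ε * R ^ 2 := by
      gcongr
      exact hR x hx
    have h3 : 0 ≤ ε * ‖x₀‖ ^ 2 := by positivity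
    linarith
  have hxΩ : x ∈ Ω := by
    by_contra hn
    have := hbd x ⟨hx, by rwa [hΩopen.interior_eq]⟩
    linarith
  have hnhds : Ω ∈ nhds x := hΩopen.mem_nhds hxΩ
  have hwd : ContDiffAt ℝ 2 w x := hw.contDiffAt hnhds
  have hq : ContDiffAt ℝ 2 (fun y : EuclideanSpace ℝ (Fin N) => ‖y‖ ^ 2) x :=
    (contDiff_norm_sq ℝ).contDiffAt
  have hlap := laplacian_nonpos_of_isLocalMax (hwd.add (contDiffAt_const.mul hq))
    (hmax.isLocalMax (mem_of_superset hnhds subset_closure))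
  have heq := laplacian_add_const_mul ε hwd hq
  rw [laplacian_norm_sq] at heq
  have hlap' : laplacian w x + ε * (2 * N) ≤ 0 := heq ▸ hlap
  have hNpos : (0 : ℝ) < N := by exact_mod_cast hN
  have := hsub x hxΩ hwx
  have : 0 < ε * (2 * N) := by positivity
  linarith

theorem proportional_components {N : ℕ} (hN : 2 ≤ N) {Ω : Set (EuclideanSpace ℝ (Fin N))}
    (hΩopen : IsOpen Ω) (hΩne : Ω.Nonempty) (hΩbdd : Bornology.IsBounded Ω)
    {k : ℝ} (hk : 0 < k)
    {f g : EuclideanSpace ℝ (Fin N) → ℝ → ℝ → ℝ}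
    (hcond : ∀ x ∈ Ω, ∀ s r : ℝ, (s - k * r) * (f x s r - k * g x s r) ≤ 0)
    {u v : EuclideanSpace ℝ (Fin N) → ℝ}
    (hucont : ContinuousOn u (closure Ω)) (hvcont : ContinuousOn v (closure Ω))
    (hu : ContDiffOn ℝ 2 u Ω) (hv : ContDiffOn ℝ 2 v Ω)
    (heq1 : ∀ x ∈ Ω, laplacian u x + f x (u x) (v x) = 0)
    (heq2 : ∀ x ∈ Ω, laplacian v x + g x (u x) (v x) = 0)
    (hbd : ∀ x ∈ frontier Ω, u x = k * v x) :
    ∀ x ∈ Ω, u x = k * v x := by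
  have hud : ∀ x ∈ Ω, ContDiffAt ℝ 2 u x := fun x hx => hu.contDiffAt (hΩopen.mem_nhds hx)
  have hvd : ∀ x ∈ Ω, ContDiffAt ℝ 2 v x := fun x hx => hv.contDiffAt (hΩopen.mem_nhds hx)
  have hle : ∀ x ∈ Ω, u x + -k * v x ≤ 0 := by
    refine nonpos_of_laplacian_nonneg (by omega) hΩopen hΩbdd (by fun_prop)
      (hu.add (contDiffOn_const.mul hv)) (fun x hx hpos => ?_) (fun x hx => ?_)
    · rw [laplacian_add_const_mul (-k) (hud x hx) (hvd x hx)]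
      have h1 : f x (u x) (v x) - k * g x (u x) (v x) ≤ 0 :=
        nonpos_of_mul_nonpos_right (hcond x hx (u x) (v x)) (by linarith)
      linear_combination h1 - heq1 x hx + k * heq2 x hx
    · linarith [hbd x hx]
  have hge : ∀ x ∈ Ω, k * v x + -1 * u x ≤ 0 := by
    have hkv : ContDiffOn ℝ 2 (fun x => k * v x) Ω := contDiffOn_const.mul hv
    refine nonpos_of_laplacian_nonneg (by omega) hΩopen hΩbdd (by fun_prop)
      (hkv.add (contDiffOn_const.mul hu)) (fun x hx hpos => ?_) (fun x hx => ?_)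
    · have hkvl : laplacian (fun y => k * v y) x = k * laplacian v x := by
        have h := laplacian_add_const_mul k (contDiffAt_const (c := (0 : ℝ))) (hvd x hx)
        simpa [laplacian, iteratedFDeriv_const_of_ne] using h
      rw [laplacian_add_const_mul (-1) (hkv.contDiffAt (hΩopen.mem_nhds hx)) (hud x hx), hkvl]
      have h1 : 0 ≤ f x (u x) (v x) - k * g x (u x) (v x) := by
        by_contra! hneg
        nlinarith [hcond x hx (u x) (v x)]
      linear_combination h1 + heq1 x hx - k * heq2 x hx
    · linarith [hbd x hx]
  intro x hx
  linarith [hle x hx, hge x hx]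
end

section
/- Let N ≥ 2, let Ω ⊆ ℝ^N be a nonempty bounded open set, and let f : Ω × ℝ → ℝ be such that for each x ∈ Ω the map s ↦ f(x,s) is nondecreasing and continuous. Let u, v : ℝ^N → ℝ be continuous on cl(Ω), twice continuously differentiable on Ω, and satisfy −Δu(x) = f(x, v(x)) and −Δv(x) = f(x, u(x)) for all x ∈ Ω. If u = v on ∂Ω, then u = v on Ω. -/
/-!
The proof is the weak maximum principle applied to `w = u - v`. Where `w > 0`, monotonicity of
`f x` gives `Δw = f x u - f x v ≥ 0`. If `w` were positive somewhere, then for small `ε > 0` the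
function `w + ε‖x‖²` would attain its maximum over the compact set `closure Ω` at an interior point
where `w > 0`. There its Laplacian is at least `2Nε > 0`, while at an interior maximum all pure
second derivatives are nonpositive (`iteratedFDeriv_two_nonpos_of_isLocalMax`).
Hence `u ≤ v` (`hamiltonian_le`), and the hypotheses are symmetric in `u` and `v`.
-/

open MeasureTheory Asymptotics Filter Metric Set

/-- Second-order necessary condition at an interior maximum, in an arbitrary direction. -/
theorem iteratedFDeriv_two_nonpos_of_isLocalMax {N : ℕ} {g : EuclideanSpace ℝ (Fin N) → ℝ}
    {y : EuclideanSpace ℝ (Fin N)} (hg : ContDiffAt ℝ 2 g y) (hmax : IsLocalMax g y)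
    (e : EuclideanSpace ℝ (Fin N)) : iteratedFDeriv ℝ 2 g y ![e, e] ≤ 0 := by
  have hline : ∀ t : ℝ, HasDerivAt (fun t : ℝ => y + t • e) e t := fun t => by
    simpa using ((hasDerivAt_id t).smul_const e).const_add y
  have htend : Tendsto (fun t : ℝ => y + t • e) (nhds 0) (nhds y) := by
    simpa using (hline 0).continuousAt.tendsto
  have hdiff : ∀ᶠ x in nhds y, DifferentiableAt ℝ g x :=
    (hg.eventually (by simp)).mono fun x hx => hx.differentiableAt (by simp)
  have hderiv : deriv (fun t : ℝ => g (y + t • e)) =ᶠ[nhds 0]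
      fun t => fderiv ℝ g (y + t • e) e := by
    filter_upwards [htend.eventually hdiff] with t ht
    exact (ht.hasFDerivAt.comp_hasDerivAt t (hline t)).deriv
  have hD : DifferentiableAt ℝ (fderiv ℝ g) y :=
    (hg.fderiv_right (m := 1) (by norm_num)).differentiableAt (by simp)
  have hsecond : deriv (deriv fun t : ℝ => g (y + t • e)) 0 = fderiv ℝ (fderiv ℝ g) y e e := by
    rw [hderiv.deriv_eq]
    have hD0 : HasFDerivAt (fderiv ℝ g) (fderiv ℝ (fderiv ℝ g) y) (y + (0 : ℝ) • e) := by
      simpa using hD.hasFDerivAt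
    have h1 := hD0.comp_hasDerivAt (0 : ℝ) (hline 0)
    simpa using (h1.clm_apply (hasDerivAt_const (0 : ℝ) e)).deriv
  have hmax0 : IsLocalMax (fun t : ℝ => g (y + t • e)) 0 := by
    filter_upwards [htend.eventually hmax] with t ht
    simpa using ht
  have hcont : ContinuousAt (fun t : ℝ => g (y + t • e)) 0 := by
    refine ContinuousAt.comp (g := g) ?_ (hline 0).continuousAt
    simpa using hg.continuousAt
  rw [iteratedFDeriv_two_apply]
  simp only [Matrix.cons_val_zero, Matrix.cons_val_one]
  by_contra! hpos
  rw [← hsecond] at hpos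
  -- A positive second derivative makes `0` a local minimum too, so the restriction of `g` to the
  -- line is locally constant and its second derivative vanishes.
  have hmin0 := isLocalMin_of_deriv_deriv_pos hpos hmax0.deriv_eq_zero hcont
  have hconst : (fun t : ℝ => g (y + t • e)) =ᶠ[nhds 0] fun _ => g (y + (0 : ℝ) • e) := by
    filter_upwards [hmax0, hmin0] with t h1 h2 using le_antisymm h1 h2
  have hzero := hconst.deriv.deriv_eq
  simp at hzero
  linarith

theorem iteratedFDeriv_two_norm_sq {N : ℕ} (y e : EuclideanSpace ℝ (Fin N)) :
    iteratedFDeriv ℝ 2 (fun x : EuclideanSpace ℝ (Fin N) => ‖x‖ ^ 2) y ![e, e] = 2 * ‖e‖ ^ 2 := by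
  rw [iteratedFDeriv_two_apply]
  have h : fderiv ℝ (fun x : EuclideanSpace ℝ (Fin N) => ‖x‖ ^ 2) =
      fun x => ((2 : ℝ) • innerSL ℝ (E := EuclideanSpace ℝ (Fin N))) x := by
    funext x
    ext z
    simp [fderiv_norm_sq_apply]
  rw [h, ContinuousLinearMap.fderiv]
  simp only [Matrix.cons_val_zero, Matrix.cons_val_one]
  exact congrArg (2 * ·) (real_inner_self_eq_norm_sq e)

/-- One half of the symmetry: the maximum principle for `u - v`. -/
theorem hamiltonian_le {N : ℕ} (hN : 2 ≤ N) {Ω : Set (EuclideanSpace ℝ (Fin N))}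
    (hΩopen : IsOpen Ω) (hΩbdd : Bornology.IsBounded Ω)
    {f : EuclideanSpace ℝ (Fin N) → ℝ → ℝ}
    (hfmono : ∀ x ∈ Ω, Monotone (f x))
    {u v : EuclideanSpace ℝ (Fin N) → ℝ}
    (hucont : ContinuousOn u (closure Ω)) (hvcont : ContinuousOn v (closure Ω))
    (hu : ContDiffOn ℝ 2 u Ω) (hv : ContDiffOn ℝ 2 v Ω)
    (heq1 : ∀ x ∈ Ω, -laplacian u x = f x (v x))
    (heq2 : ∀ x ∈ Ω, -laplacian v x = f x (u x))
    (hbd : ∀ x ∈ frontier Ω, u x = v x) :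
    ∀ x ∈ Ω, u x ≤ v x := by
  intro x₀ hx₀
  by_contra! hlt
  have hcomp : IsCompact (closure Ω) := hΩbdd.isCompact_closure
  obtain ⟨R, hR⟩ := hcomp.isBounded.exists_norm_le
  have hR0 : 0 ≤ R := (norm_nonneg _).trans (hR x₀ (subset_closure hx₀))
  -- `ε` is small enough that `ε‖x‖²` stays below `u x₀ - v x₀` on `closure Ω`.
  obtain ⟨ε, hε, hεR⟩ : ∃ ε > (0 : ℝ), ε * R ^ 2 < u x₀ - v x₀ := by
    refine ⟨(u x₀ - v x₀) / (R ^ 2 + 1), by have := sub_pos.2 hlt; positivity, ?_⟩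
    have := sub_pos.2 hlt
    rw [div_mul_eq_mul_div, div_lt_iff₀ (by positivity)]
    nlinarith
  obtain ⟨y, hy, hymax⟩ := hcomp.exists_isMaxOn ⟨x₀, subset_closure hx₀⟩
    ((hucont.sub hvcont).add
      ((continuous_norm.pow 2).const_smul ε).continuousOn)
  have hval : ∀ x ∈ closure Ω, u x - v x + ε * ‖x‖ ^ 2 ≤ u y - v y + ε * ‖y‖ ^ 2 :=
    fun x hx => by simpa using hymax hx
  have hwy : v y < u y := by
    have h1 := hval x₀ (subset_closure hx₀)
    have h2 : ε * ‖y‖ ^ 2 ≤ ε * R ^ 2 := by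
      have := hR y hy
      gcongr
    have h3 : 0 ≤ ε * ‖x₀‖ ^ 2 := by positivity
    linarith
  have hyΩ : y ∈ Ω := by
    by_contra hn
    have := hbd y ⟨hy, by rwa [hΩopen.interior_eq]⟩
    linarith
  have hnhds := hΩopen.mem_nhds hyΩ
  have huy := hu.contDiffAt hnhds
  have hvy := hv.contDiffAt hnhds
  have hq : ContDiffAt ℝ 2 (fun x : EuclideanSpace ℝ (Fin N) => ‖x‖ ^ 2) y :=
    (contDiff_norm_sq ℝ).contDiffAt
  have hloc : IsLocalMax (u - v + ε • fun x => ‖x‖ ^ 2) y := by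
    filter_upwards [hnhds] with x hx
    simpa using hval x (subset_closure hx)
  have hdir : ∀ i : Fin N,
      iteratedFDeriv ℝ 2 u y ![EuclideanSpace.single i 1, EuclideanSpace.single i 1]
      - iteratedFDeriv ℝ 2 v y ![EuclideanSpace.single i 1, EuclideanSpace.single i 1]
      + ε * 2 ≤ 0 := by
    intro i
    have h := iteratedFDeriv_two_nonpos_of_isLocalMax (g := u - v + ε • fun x => ‖x‖ ^ 2)
      ((huy.sub hvy).add (hq.const_smul ε)) hloc (EuclideanSpace.single i 1)
    rw [iteratedFDeriv_add_apply (f := u - v) (g := ε • fun x => ‖x‖ ^ 2)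
        (huy.sub hvy) (hq.const_smul ε),
      iteratedFDeriv_sub_apply huy hvy, iteratedFDeriv_const_smul_apply hq] at h
    simpa [iteratedFDeriv_two_norm_sq] using h
  have hsum := Finset.sum_nonpos fun i (_ : i ∈ Finset.univ) => hdir i
  rw [Finset.sum_add_distrib, Finset.sum_sub_distrib] at hsum
  simp only [Finset.sum_const, Finset.card_univ, Fintype.card_fin, nsmul_eq_mul] at hsum
  have h1 := heq1 y hyΩ
  have h2 := heq2 y hyΩ
  have h3 := hfmono y hyΩ hwy.le
  unfold laplacian at h1 h2
  have h4 : 0 < (N : ℝ) * (ε * 2) := by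
    have : 0 < (N : ℝ) := by exact_mod_cast (by omega : 0 < N)
    positivity
  linarith

theorem hamiltonian_symmetry {N : ℕ} (hN : 2 ≤ N) {Ω : Set (EuclideanSpace ℝ (Fin N))}
    (hΩopen : IsOpen Ω) (hΩne : Ω.Nonempty) (hΩbdd : Bornology.IsBounded Ω)
    {f : EuclideanSpace ℝ (Fin N) → ℝ → ℝ}
    (hfmono : ∀ x ∈ Ω, Monotone (f x)) (hfcont : ∀ x ∈ Ω, Continuous (f x))
    {u v : EuclideanSpace ℝ (Fin N) → ℝ}
    (hucont : ContinuousOn u (closure Ω)) (hvcont : ContinuousOn v (closure Ω))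
    (hu : ContDiffOn ℝ 2 u Ω) (hv : ContDiffOn ℝ 2 v Ω)
    (heq1 : ∀ x ∈ Ω, -laplacian u x = f x (v x))
    (heq2 : ∀ x ∈ Ω, -laplacian v x = f x (u x))
    (hbd : ∀ x ∈ frontier Ω, u x = v x) :
    ∀ x ∈ Ω, u x = v x := by
  intro x hx
  exact le_antisymm
    (hamiltonian_le hN hΩopen hΩbdd hfmono hucont hvcont hu hv heq1 heq2 hbd x hx)
    (hamiltonian_le hN hΩopen hΩbdd hfmono hvcont hucont hv hu heq2 heq1
      (fun z hz => (hbd z hz).symm) x hx)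
end

section
/- Let N ≥ 2, let Ω ⊆ ℝ^N be open, let x₀ ∈ Ω, and let p, q > 0. Let u, v : ℝ^N → ℝ be twice continuously differentiable on Ω, and suppose there are r₀ > 0 and C > 0 with cl(B_{r₀}(x₀)) ⊆ Ω and |Δu(x)| ≤ C·|v(x)|^q, |Δv(x)| ≤ C·|u(x)|^p for all x ∈ B_{r₀}(x₀). If both u and v vanish with infinite order at x₀, then u and v vanish at x₀ with polynomial vanishing of infinite order, i.e., for every β > 0 one has u(x)/|x − x₀|^β → 0 and v(x)/|x − x₀|^β → 0 as x → x₀. -/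
/-!
For a function that is Lipschitz near `x₀`, as every `C²` function is, a large value at one point
forces a large integral nearby. Let `w` be `L`-Lipschitz near `x₀` and suppose
`|w x| > r ^ γ` at a point `x` with `r = ‖x - x₀‖` small and `γ ≥ 1`. Then `|w| ≥ r ^ γ / 2` on the
ball of radius `r ^ γ / (2 L)` about `x`, which lies in `ball x₀ (2 r)`. Hence
`∫ |w| ^ ε` over `ball x₀ (2 r)` is at least a constant times `r ^ (γ (ε + N))`, which contradicts
vanishing of infinite order with the exponent `m = γ (ε + N)`. So `|w x| ≤ ‖x - x₀‖ ^ γ` near `x₀`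
for every `γ ≥ 1` (`eventually_abs_le_rpow`), and `γ = β + 1` gives polynomial vanishing.
-/

open MeasureTheory Asymptotics Filter Metric Set

/-- Vanishing of infinite order in the integral sense upgrades to a pointwise bound of any
polynomial order for locally Lipschitz functions. -/
theorem eventually_abs_le_rpow {N : ℕ} {w : EuclideanSpace ℝ (Fin N) → ℝ}
    {x₀ : EuclideanSpace ℝ (Fin N)}
    (hw : ∃ K, ∃ t ∈ nhds x₀, LipschitzOnWith K w t) (hv : VanishesInfOrder w x₀)
    {γ : ℝ} (hγ : 1 ≤ γ) :
    ∀ᶠ x in nhdsWithin x₀ {x₀}ᶜ, |w x| ≤ ‖x - x₀‖ ^ γ := by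
  obtain ⟨K, t, ht, hK⟩ := hw
  obtain ⟨ε, hε, hv⟩ := hv
  obtain ⟨δ, hδ, hδt⟩ := Metric.nhds_basis_closedBall.mem_iff.1 ht
  set L : ℝ := K + 1 with hL
  have hL1 : 1 ≤ L := by simp only [hL]; linarith [K.coe_nonneg]
  set m : ℝ := γ * (ε + N) with hm
  have hm0 : 0 < m := by positivity
  set V : ℝ := volume.real (ball (0 : EuclideanSpace ℝ (Fin N)) 1) with hV
  have hV0 : 0 < V :=
    ENNReal.toReal_pos (measure_ball_pos _ _ one_pos).ne' measure_ball_lt_top.ne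
  -- `κ * r ^ m` is the lower bound for the integral over `ball x₀ (2 * r)`.
  set κ : ℝ := (1 / 2) ^ ε * ((1 / (2 * L)) ^ N * V) with hκ
  have hκ0 : 0 < κ := by positivity
  have hc : 0 < κ / 2 / 2 ^ m := by positivity
  have hsmall := (hv m hm0).def hc
  have hlim : Tendsto (fun x : EuclideanSpace ℝ (Fin N) => 2 * ‖x - x₀‖)
      (nhdsWithin x₀ {x₀}ᶜ) (nhdsWithin 0 (Ioi 0)) := by
    refine tendsto_nhdsWithin_iff.2 ⟨?_, ?_⟩
    · have : Continuous fun x : EuclideanSpace ℝ (Fin N) => 2 * ‖x - x₀‖ := by fun_prop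
      simpa using (this.tendsto x₀).mono_left nhdsWithin_le_nhds
    · filter_upwards [self_mem_nhdsWithin] with x hx
      have : 0 < ‖x - x₀‖ := norm_pos_iff.2 (sub_ne_zero.2 hx)
      simpa using this
  have hnear : ∀ᶠ x in nhdsWithin x₀ {x₀}ᶜ, x ∈ ball x₀ (min (1 / 2) (δ / 2)) :=
    mem_nhdsWithin_of_mem_nhds (ball_mem_nhds _ (by positivity))
  filter_upwards [hlim.eventually hsmall, hnear, self_mem_nhdsWithin] with x hint hx hne
  by_contra! hlt
  set r : ℝ := ‖x - x₀‖ with hr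
  have hr0 : 0 < r := norm_pos_iff.2 (sub_ne_zero.2 hne)
  rw [mem_ball, dist_eq_norm, ← hr, lt_min_iff] at hx
  obtain ⟨hr1, hrδ⟩ := hx
  have hrγ0 : 0 < r ^ γ := by positivity
  have hrγ : r ^ γ ≤ r := by
    simpa using Real.rpow_le_rpow_of_exponent_ge hr0 (by linarith) hγ
  set ρ : ℝ := r ^ γ * (1 / (2 * L)) with hρ
  have hρ0 : 0 < ρ := by positivity
  have hLρ : L * ρ = r ^ γ / 2 := by rw [hρ]; field_simp
  have hρr : ρ ≤ r / 2 := by nlinarith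
  have hsub : ball x ρ ⊆ ball x₀ (2 * r) := by
    refine ball_subset_ball' ?_
    rw [dist_eq_norm, ← hr]
    linarith
  have hsubt : closedBall x₀ (2 * r) ⊆ t :=
    (closedBall_subset_closedBall (by linarith)).trans hδt
  have hxt : x ∈ t := hsubt (by rw [mem_closedBall, dist_eq_norm, ← hr]; linarith)
  have hcont : ContinuousOn (fun y => |w y| ^ ε) (closedBall x₀ (2 * r)) :=
    ((hK.continuousOn.mono hsubt).abs).rpow_const fun _ _ => Or.inr hε.le
  have hI : IntegrableOn (fun y => |w y| ^ ε) (ball x₀ (2 * r)) :=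
    (hcont.integrableOn_compact (isCompact_closedBall _ _)).mono_set ball_subset_closedBall
  have hlow : ∀ y ∈ ball x ρ, (r ^ γ * (1 / 2)) ^ ε ≤ |w y| ^ ε := by
    intro y hy
    have hyt : y ∈ t := hsubt (ball_subset_closedBall (hsub hy))
    have h1 := hK.dist_le_mul x hxt y hyt
    rw [Real.dist_eq, dist_comm x y] at h1
    have h2 : dist y x < ρ := hy
    have h3 : (K : ℝ) * dist y x ≤ L * ρ :=
      mul_le_mul (by rw [hL]; linarith) h2.le dist_nonneg (by linarith)
    have h4 := abs_sub_abs_le_abs_sub (w x) (w y)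
    exact Real.rpow_le_rpow (by positivity) (by linarith) hε.le
  have hvol : volume.real (ball x ρ) = ρ ^ N * V := by
    rw [Measure.real, Measure.addHaar_ball_of_pos volume x hρ0, ENNReal.toReal_mul,
      ENNReal.toReal_ofReal (by positivity), finrank_euclideanSpace_fin, hV, Measure.real]
  have hge : (r ^ γ * (1 / 2)) ^ ε * volume.real (ball x ρ) ≤ ∫ y in ball x ρ, |w y| ^ ε :=
    setIntegral_ge_of_const_le_real measurableSet_ball measure_ball_lt_top.ne hlow
      (hI.mono_set hsub)
  have hmono : ∫ y in ball x ρ, |w y| ^ ε ≤ ∫ y in ball x₀ (2 * r), |w y| ^ ε :=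
    setIntegral_mono_set hI (Eventually.of_forall fun y => by positivity)
      (Eventually.of_forall hsub)
  have hkey : (r ^ γ * (1 / 2)) ^ ε * (ρ ^ N * V) = κ * r ^ m := by
    rw [hm, Real.rpow_mul hr0.le, Real.rpow_add hrγ0, Real.rpow_natCast, hκ, hρ,
      Real.mul_rpow hrγ0.le (by norm_num), mul_pow]
    ring
  have hup : ∫ y in ball x₀ (2 * r), |w y| ^ ε ≤ κ / 2 * r ^ m := by
    refine (le_abs_self _).trans (hint.trans_eq ?_)
    rw [Real.norm_of_nonneg (by positivity), Real.mul_rpow (by norm_num) hr0.le]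
    field_simp
  have hrm : 0 < r ^ m := by positivity
  rw [hvol, hkey] at hge
  nlinarith

theorem tendsto_div_rpow {N : ℕ} {w : EuclideanSpace ℝ (Fin N) → ℝ}
    {x₀ : EuclideanSpace ℝ (Fin N)} (hw : ContDiffAt ℝ 2 w x₀) (hv : VanishesInfOrder w x₀)
    {β : ℝ} (hβ : 0 < β) :
    Tendsto (fun x => w x / ‖x - x₀‖ ^ β) (nhdsWithin x₀ {x₀}ᶜ) (nhds 0) := by
  have hlip := (hw.of_le (by norm_num : (1 : WithTop ℕ∞) ≤ 2)).exists_lipschitzOnWith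
  have hlim : Tendsto (fun x => ‖x - x₀‖) (nhdsWithin x₀ {x₀}ᶜ) (nhds 0) := by
    have : Continuous fun x : EuclideanSpace ℝ (Fin N) => ‖x - x₀‖ := by fun_prop
    simpa using (this.tendsto x₀).mono_left nhdsWithin_le_nhds
  refine squeeze_zero_norm' ?_ hlim
  filter_upwards [eventually_abs_le_rpow hlip hv (by linarith : 1 ≤ β + 1),
    self_mem_nhdsWithin] with x hx hne
  have hr0 : 0 < ‖x - x₀‖ := norm_pos_iff.2 (sub_ne_zero.2 hne)
  rw [norm_div, Real.norm_eq_abs, Real.norm_of_nonneg (by positivity),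
    div_le_iff₀ (by positivity)]
  rwa [Real.rpow_add hr0, Real.rpow_one, mul_comm] at hx

theorem polynomial_vanishing {N : ℕ} (hN : 2 ≤ N) {Ω : Set (EuclideanSpace ℝ (Fin N))}
    (hΩopen : IsOpen Ω) {x₀ : EuclideanSpace ℝ (Fin N)} (hx₀ : x₀ ∈ Ω)
    {p q : ℝ} (hp : 0 < p) (hq : 0 < q)
    {u v : EuclideanSpace ℝ (Fin N) → ℝ}
    (hu : ContDiffOn ℝ 2 u Ω) (hv : ContDiffOn ℝ 2 v Ω)
    {r₀ C : ℝ} (hr₀ : 0 < r₀) (hC : 0 < C)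
    (hball : closedBall x₀ r₀ ⊆ Ω)
    (hbound : ∀ x ∈ ball x₀ r₀,
      |laplacian u x| ≤ C * |v x| ^ q ∧ |laplacian v x| ≤ C * |u x| ^ p)
    (hu0 : VanishesInfOrder u x₀) (hv0 : VanishesInfOrder v x₀) :
    ∀ β > (0:ℝ),
      Tendsto (fun x => u x / ‖x - x₀‖ ^ β) (nhdsWithin x₀ {x₀}ᶜ) (nhds 0) ∧
      Tendsto (fun x => v x / ‖x - x₀‖ ^ β) (nhdsWithin x₀ {x₀}ᶜ) (nhds 0) := by
  have hΩ := hΩopen.mem_nhds hx₀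
  exact fun β hβ => ⟨tendsto_div_rpow (hu.contDiffAt hΩ) hu0 hβ,
    tendsto_div_rpow (hv.contDiffAt hΩ) hv0 hβ⟩
end
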